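/- Let P be a simple polygon (without holes) that is weakly visible from its edge uv, and let z_1, z_2, …, z_k be distinct vertices of P such that for all i < j, the vertex z_j is not visible from p_u(z_i) and not visible from p_v(z_i), and such that p_u(z_i) ≠ p_v(z_i) for each i. Then the vertices p_u(z_1), p_v(z_1), …, p_u(z_k), p_v(z_k) are pairwise distinct; in particular, the guard set S_A = {p_u(z_i) : 1 ≤ i ≤ k} ∪ {p_v(z_i) : 1 ≤ i ≤ k} satisfies |S_A| = 2k. -/

import Mathlib

/-!
Every vertex is visible from each of its two parents, because the last edge of a geodesic lies in
`P`. Hence, if a parent of `z i` coincided with a parent of `z j` for some `i < j`, then `z j` would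
be visible from that parent of `z i`, which the hypothesis on the sequence forbids. For `i = j` the
two parents differ by assumption, so all `2k` parents are distinct.
-/

open Set

/-- Points of the Euclidean plane. -/
abbrev Pt : Type := EuclideanSpace ℝ (Fin 2)

/-- `z` is visible from `g` inside the region `P`: the segment `gz` lies in `P`. -/
def Visible (P : Set Pt) (g z : Pt) : Prop := segment ℝ g z ⊆ P

/-- `l` is a polygonal path from `a` to `b` all of whose segments lie in `P`. -/
def IsPathIn (P : Set Pt) (a b : Pt) (l : List Pt) : Prop :=
  l ≠ [] ∧ l.head? = some a ∧ l.getLast? = some b ∧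
    l.Chain' (fun p q => segment ℝ p q ⊆ P)

/-- Euclidean length of a polygonal path. -/
noncomputable def pathLen : List Pt → ℝ
  | [] => 0
  | [_] => 0
  | a :: b :: l => dist a b + pathLen (b :: l)

/-- `l` is a Euclidean shortest (geodesic) polygonal path from `a` to `b` inside `P`. -/
def IsGeodesic (P : Set Pt) (a b : Pt) (l : List Pt) : Prop :=
  IsPathIn P a b l ∧ ∀ l', IsPathIn P a b l' → pathLen l ≤ pathLen l'

/-- A simple polygon (closed region without holes) whose vertices, in clockwise
order, are `vtx 0, vtx 1, …, vtx (n-1)`; in particular `u := vtx 0` is the next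
clockwise vertex after `v := vtx (n-1)`, so `uv` is an edge of the polygon.
The fields `pu`, `pv` are the parent maps of the shortest path trees `SPT(u)`
and `SPT(v)`: for a point `x` of `P`, `pu x` is the vertex adjacent to `x` on
the Euclidean shortest path from `u` to `x` inside `P` (and analogously `pv`). -/
structure SimplePolygon where
  /-- number of vertices -/
  n : ℕ
  three_le : 3 ≤ n
  /-- the vertices in clockwise order (extended periodically) -/
  vtx : ℕ → Pt
  periodic : ∀ i, vtx (i + n) = vtx i
  inj : ∀ i < n, ∀ j < n, vtx i = vtx j → i = j
  /-- the closed polygonal region -/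
  P : Set Pt
  compact' : IsCompact P
  connected' : IsConnected P
  regular : P = closure (interior P)
  /-- the topological boundary of the region is the union of the edges -/
  boundary : frontier P = ⋃ i ∈ Finset.range n, segment ℝ (vtx i) (vtx (i + 1))
  /-- simplicity: two distinct edges meet only in common endpoints -/
  simple : ∀ i < n, ∀ j < n, i ≠ j →
    segment ℝ (vtx i) (vtx (i + 1)) ∩ segment ℝ (vtx j) (vtx (j + 1)) ⊆
      ({vtx i, vtx (i + 1)} ∩ {vtx j, vtx (j + 1)} : Set Pt)
  /-- parent in the shortest path tree rooted at `u = vtx 0` -/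
  pu : Pt → Pt
  /-- parent in the shortest path tree rooted at `v = vtx (n-1)` -/
  pv : Pt → Pt
  pu_root : pu (vtx 0) = vtx 0
  pv_root : pv (vtx (n - 1)) = vtx (n - 1)
  pu_spec : ∀ x ∈ P, x ≠ vtx 0 →
    (∃ i < n, pu x = vtx i) ∧ ∃ l, IsGeodesic P (vtx 0) x (l ++ [pu x, x])
  pv_spec : ∀ x ∈ P, x ≠ vtx (n - 1) →
    (∃ i < n, pv x = vtx i) ∧ ∃ l, IsGeodesic P (vtx (n - 1)) x (l ++ [pv x, x])

namespace SimplePolygon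

variable (S : SimplePolygon)

/-- The vertex `u`. -/
def u : Pt := S.vtx 0

/-- The vertex `v` (`u` is the next clockwise vertex after `v`). -/
def v : Pt := S.vtx (S.n - 1)

/-- `x` is a vertex of the polygon. -/
def IsVertex (x : Pt) : Prop := ∃ i < S.n, x = S.vtx i

/-- `P` is weakly visible from the edge `uv`. -/
def WeaklyVisible : Prop := ∀ z ∈ S.P, ∃ w ∈ segment ℝ S.u S.v, Visible S.P w z

/-- The polygon is orthogonal: every edge is horizontal or vertical. -/
def IsOrthogonal : Prop :=
  ∀ i < S.n, S.vtx i 0 = S.vtx (i + 1) 0 ∨ S.vtx i 1 = S.vtx (i + 1) 1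

/-- Clockwise parameterisation of the boundary of `P` by `t ∈ [0, n)`. -/
noncomputable def bdPt (t : ℝ) : Pt :=
  AffineMap.lineMap (S.vtx ⌊t⌋.toNat) (S.vtx (⌊t⌋.toNat + 1)) (Int.fract t)

/-- `bd_c(p,q)`: the clockwise boundary chain of `P` from `p` to `q`. -/
def bdC (p q : Pt) : Set Pt :=
  {x | ∃ a b c : ℝ, a ∈ Set.Ico (0 : ℝ) (S.n : ℝ) ∧ b ∈ Set.Ico (0 : ℝ) (S.n : ℝ) ∧
    c ∈ Set.Ico (0 : ℝ) (S.n : ℝ) ∧ S.bdPt a = p ∧ S.bdPt b = q ∧ S.bdPt c = x ∧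
    ((a ≤ b ∧ a ≤ c ∧ c ≤ b) ∨ (b < a ∧ (a ≤ c ∨ c ≤ b)))}

/-- `bd_cc(p,q)`: the counterclockwise boundary chain of `P` from `p` to `q`. -/
def bdCC (p q : Pt) : Set Pt := S.bdC q p

/-- The visibility polygon `VP(g)` of a point `g` of `P`. -/
def VP (g : Pt) : Set Pt := {q ∈ S.P | Visible S.P g q}

/-- A constructed edge of `VP(s)` through the lid vertex `y`, with lid point `x`:
the segment from `s` through `y` extended maximally inside `P`, ending on the
boundary of `P` at `x`. -/
def IsConstructedEdge (s y x : Pt) : Prop :=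
  S.IsVertex y ∧ s ≠ y ∧ y ≠ x ∧ x ∈ frontier S.P ∧ y ∈ segment ℝ s x ∧
    segment ℝ s x ⊆ S.P ∧
    ∀ x', y ∈ segment ℝ s x' → segment ℝ s x' ⊆ S.P → x' ∈ segment ℝ s x

/-- The region of `P` cut off from `s` by the chord `yx`. -/
def pocket (s y x : Pt) : Set Pt :=
  S.P \ connectedComponentIn (S.P \ segment ℝ y x) s

/-- `Q` is a left pocket of `VP(s)`: it is cut off by a constructed edge `yx`
whose lid vertex `y` lies on `bd_c(s,x)`. -/
def IsLeftPocket (s : Pt) (Q : Set Pt) : Prop :=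
  ∃ y x, S.IsConstructedEdge s y x ∧ y ∈ S.bdC s x ∧ Q = S.pocket s y x

/-- `Q` is a right pocket of `VP(s)`: it is cut off by a constructed edge `yx`
whose lid vertex `y` lies on `bd_cc(s,x)`. -/
def IsRightPocket (s : Pt) (Q : Set Pt) : Prop :=
  ∃ y x, S.IsConstructedEdge s y x ∧ y ∈ S.bdCC s x ∧ Q = S.pocket s y x

/-- An invisible cell relative to the union `U` of visibility polygons of the
guards: a connected component of `P \ U` with nonempty interior. -/
def InvisCell (U C : Set Pt) : Prop :=
  (∃ x ∈ S.P \ U, C = connectedComponentIn (S.P \ U) x) ∧ (interior C).Nonempty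

end SimplePolygon

/-- The last edge of a polygonal path inside `P` lies in `P`. -/
theorem IsPathIn.visible_last {P : Set Pt} {a b p q : Pt} {l : List Pt}
    (h : IsPathIn P a b (l ++ [p, q])) : Visible P p q := by
  obtain ⟨-, -, -, hc⟩ := h
  have h' := (List.isChain_append.1 hc).2.1
  simpa [Visible] using h'

namespace SimplePolygon

variable (S : SimplePolygon)

theorem vertex_mem {x : Pt} (hx : S.IsVertex x) : x ∈ S.P := by
  obtain ⟨i, hi, rfl⟩ := hx
  apply S.compact'.isClosed.frontier_subset
  rw [S.boundary]
  exact Set.mem_biUnion (Finset.mem_coe.2 (Finset.mem_range.2 hi)) (left_mem_segment ℝ _ _)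

theorem visible_pu {x : Pt} (hx : S.IsVertex x) : Visible S.P (S.pu x) x := by
  have hxP := S.vertex_mem hx
  by_cases h : x = S.vtx 0
  -- the root is its own parent, and the segment degenerates to a point
  · have hp : S.pu x = x := by rw [h, S.pu_root]
    rw [hp, Visible, segment_same]
    exact Set.singleton_subset_iff.2 hxP
  · obtain ⟨-, l, hl⟩ := S.pu_spec x hxP h
    exact hl.1.visible_last

theorem visible_pv {x : Pt} (hx : S.IsVertex x) : Visible S.P (S.pv x) x := by
  have hxP := S.vertex_mem hx
  by_cases h : x = S.vtx (S.n - 1)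
  · have hp : S.pv x = x := by rw [h, S.pv_root]
    rw [hp, Visible, segment_same]
    exact Set.singleton_subset_iff.2 hxP
  · obtain ⟨-, l, hl⟩ := S.pv_spec x hxP h
    exact hl.1.visible_last

end SimplePolygon


/-- If `z_1, …, z_k` are distinct vertices such that for
`i < j` the vertex `z_j` is not visible from `p_u(z_i)` nor from `p_v(z_i)`, and
`p_u(z_i) ≠ p_v(z_i)` for each `i`, then the `2k` parents are pairwise distinct;
in particular the guard set `S_A = {p_u(z_i)} ∪ {p_v(z_i)}` has `|S_A| = 2k`. -/
theorem guard_set_has_size_two_k (S : SimplePolygon) (hwv : S.WeaklyVisible)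
    (k : ℕ) (z : Fin k → Pt) (hzv : ∀ i, S.IsVertex (z i))
    (hzinj : Function.Injective z)
    (h2 : ∀ i j : Fin k, i < j →
      ¬ Visible S.P (S.pu (z i)) (z j) ∧ ¬ Visible S.P (S.pv (z i)) (z j))
    (hne : ∀ i, S.pu (z i) ≠ S.pv (z i)) :
    (∀ i j : Fin k, S.pu (z i) = S.pu (z j) → i = j) ∧
    (∀ i j : Fin k, S.pv (z i) = S.pv (z j) → i = j) ∧
    (∀ i j : Fin k, S.pu (z i) ≠ S.pv (z j)) ∧
    (Set.range (fun i => S.pu (z i)) ∪ Set.range (fun i => S.pv (z i))).ncard = 2 * k := by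
  have hu := fun i => S.visible_pu (hzv i)
  have hv := fun i => S.visible_pv (hzv i)
  have huu : ∀ i j : Fin k, S.pu (z i) = S.pu (z j) → i = j := by
    intro i j h
    rcases lt_trichotomy i j with hij | hij | hij
    · exact absurd (h ▸ hu j) (h2 i j hij).1
    · exact hij
    · exact absurd (h ▸ hu i) (h2 j i hij).1
  have hvv : ∀ i j : Fin k, S.pv (z i) = S.pv (z j) → i = j := by
    intro i j h
    rcases lt_trichotomy i j with hij | hij | hij
    · exact absurd (h ▸ hv j) (h2 i j hij).2
    · exact hij
    · exact absurd (h ▸ hv i) (h2 j i hij).2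
  have huv : ∀ i j : Fin k, S.pu (z i) ≠ S.pv (z j) := by
    intro i j h
    rcases lt_trichotomy i j with hij | hij | hij
    · exact (h2 i j hij).1 (h ▸ hv j)
    · subst hij
      exact hne i h
    · exact (h2 j i hij).2 (h ▸ hu i)
  refine ⟨huu, hvv, huv, ?_⟩
  rw [Set.ncard_union_eq ?_ (Set.finite_range _) (Set.finite_range _),
    Set.ncard_range_of_injective (fun i j h => huu i j h),
    Set.ncard_range_of_injective (fun i j h => hvv i j h), Nat.card_fin, two_mul]
  rw [Set.disjoint_left]
  rintro _ ⟨i, rfl⟩ ⟨j, hj⟩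
  exact huv i j hj.symm
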